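/- (Generalized Taylor theorem) Let [a,b] ⊂ ℝ with a < b, let f be infinitely differentiable on [a,b], and let (x_n)_{n∈ℕ} be a strictly decreasing sequence of points of [a,b] with x_0 < b. Then for every m ∈ ℕ and every x ∈ (x_0, b] there exists ξ ∈ (x_m, x) such that f(x) = f(x_0) + f'(x_1)·Q(x, x_0) + f''(x_2)·Q(x, x_0, x_1) + ⋯ + f^(m)(x_m)·Q(x, x_0, …, x_{m-1}) + f^(m+1)(ξ)·Q(x, x_0, x_1, …, x_m). -/

import Mathlib

open Set intervalIntegral

/-- The Gontcharoff polynomial `Q(x, x₀, …, x_{n-1})` associated to a list of nodes,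
defined by `Q(x) = 1` and `Q(x, x₀, …, x_{n-1}) = ∫_{x₀}^{x} Q(t, x₁, …, x_{n-1}) dt`. -/
noncomputable def Qpoly : List ℝ → ℝ → ℝ
  | [], _ => 1
  | x₀ :: rest, y => ∫ t in x₀..y, Qpoly rest t

/-!
Write `Rₖ` for the error at stage `k`: `f⁽ᵏ⁾` minus its expansion along the nodes `xₖ, …, xₘ`, and
`Qₖ` for the Gontcharoff polynomial of these nodes. Differentiating drops the first node, so
`Rₖ' = Rₖ₊₁` and `Qₖ' = Qₖ₊₁`, while `Rₖ` and `Qₖ` both vanish at `xₖ`. Cauchy's mean value theorem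
on `[xₖ, ηₖ]` therefore gives `Rₖ(ηₖ) / Qₖ(ηₖ) = Rₖ₊₁(ηₖ₊₁) / Qₖ₊₁(ηₖ₊₁)` with `xₖ < ηₖ₊₁ < ηₖ`.
Since `xₖ₊₁ ≤ xₖ`, this can be iterated, starting from the evaluation point `η₀` and ending at
`f⁽ᵐ⁺¹⁾(ξ) / 1`.
-/

theorem continuous_Qpoly (l : List ℝ) : Continuous (Qpoly l) := by
  induction l with
  | nil => exact continuous_const
  | cons z l ih => exact continuous_primitive (fun _ _ => ih.intervalIntegrable _ _) z

theorem hasDerivAt_Qpoly_cons (z : ℝ) (l : List ℝ) (y : ℝ) :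
    HasDerivAt (Qpoly (z :: l)) (Qpoly l y) y :=
  ((continuous_Qpoly l).integral_hasStrictDerivAt z y).hasDerivAt

theorem Qpoly_cons_self (z : ℝ) (l : List ℝ) : Qpoly (z :: l) z = 0 :=
  integral_same

theorem Qpoly_pos {l : List ℝ} {y : ℝ} (hl : l.Pairwise (· ≥ ·)) (hy : ∀ z ∈ l, z < y) :
    0 < Qpoly l y := by
  induction l generalizing y with
  | nil => exact one_pos
  | cons z l ih =>
    obtain ⟨hz, hl⟩ := List.pairwise_cons.mp hl
    refine intervalIntegral_pos_of_pos_on ((continuous_Qpoly l).intervalIntegrable z y)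
      (fun t ht => ih hl fun w hw => ?_) (hy z List.mem_cons_self)
    exact (hz w hw).trans_lt ht.1

theorem exists_mul_Qpoly_eq_mul_Qpoly_cons {z y : ℝ} (hzy : z < y) (l : List ℝ) {g g' : ℝ → ℝ}
    (hg : ContinuousOn g (Icc z y)) (hg' : ∀ t ∈ Ioo z y, HasDerivAt g (g' t) t) (hgz : g z = 0) :
    ∃ η ∈ Ioo z y, g y * Qpoly l η = g' η * Qpoly (z :: l) y := by
  obtain ⟨η, hη, hratio⟩ := exists_ratio_hasDerivAt_eq_ratio_slope g g' hzy hg hg'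
    (Qpoly (z :: l)) (Qpoly l) (continuous_Qpoly _).continuousOn
    fun t _ => hasDerivAt_Qpoly_cons z l t
  rw [hgz, Qpoly_cons_self, sub_zero, sub_zero] at hratio
  exact ⟨η, hη, by rw [← hratio, mul_comm]⟩

theorem map_range_succ_eq_cons {α : Type*} (x : ℕ → α) (n : ℕ) :
    (List.range (n + 1)).map x = x 0 :: (List.range n).map fun k => x (k + 1) := by
  rw [List.range_succ_eq_map, List.map_cons, List.map_map]
  rfl

section GontcharoffSum

/-- The Gontcharoff expansion `∑_{k < n} cₖ Q(y, x₀, …, xₖ₋₁)`: the polynomial in `y` of degree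
less than `n` whose `k`-th derivative at the node `xₖ` is `cₖ`, for every `k < n`. -/
noncomputable def gontcharoffSum (x c : ℕ → ℝ) (n : ℕ) (y : ℝ) : ℝ :=
  ∑ k ∈ Finset.range n, c k * Qpoly ((List.range k).map x) y

variable (x c : ℕ → ℝ) (n : ℕ)

theorem gontcharoffSum_succ (y : ℝ) :
    gontcharoffSum x c (n + 1) y =
      ∑ k ∈ Finset.range n, c (k + 1) * Qpoly (x 0 :: (List.range k).map fun j => x (j + 1)) y
        + c 0 := by
  simp only [gontcharoffSum, Finset.sum_range_succ', map_range_succ_eq_cons, List.range_zero,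
    List.map_nil, Qpoly, mul_one]

theorem gontcharoffSum_succ_self : gontcharoffSum x c (n + 1) (x 0) = c 0 := by
  simp [gontcharoffSum_succ, Qpoly_cons_self]

theorem hasDerivAt_gontcharoffSum_succ (y : ℝ) :
    HasDerivAt (gontcharoffSum x c (n + 1))
      (gontcharoffSum (fun k => x (k + 1)) (fun k => c (k + 1)) n y) y := by
  rw [funext (gontcharoffSum_succ x c n)]
  exact (HasDerivAt.fun_sum fun k _ => (hasDerivAt_Qpoly_cons _ _ y).const_mul _).add_const _

end GontcharoffSum

section Remainder

variable {a b y : ℝ} {x : ℕ → ℝ} {m : ℕ}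

theorem exists_sub_gontcharoffSum_mul_Qpoly_eq {g g' : ℝ → ℝ} {c : ℕ → ℝ} (n : ℕ) (hy : x 0 < y)
    (hg : ContinuousOn g (Icc (x 0) y)) (hg' : ∀ t ∈ Ioo (x 0) y, HasDerivAt g (g' t) t)
    (hc : g (x 0) = c 0) :
    ∃ η ∈ Ioo (x 0) y,
      (g y - gontcharoffSum x c (n + 1) y) * Qpoly ((List.range n).map fun k => x (k + 1)) η =
        (g' η - gontcharoffSum (fun k => x (k + 1)) (fun k => c (k + 1)) n η) *
          Qpoly ((List.range (n + 1)).map x) y := by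
  have hsum := hasDerivAt_gontcharoffSum_succ x c n
  rw [map_range_succ_eq_cons]
  exact exists_mul_Qpoly_eq_mul_Qpoly_cons hy _
    (hg.sub fun t _ => (hsum t).continuousAt.continuousWithinAt)
    (fun t ht => (hg' t ht).sub (hsum t))
    (sub_eq_zero.mpr (hc.trans (gontcharoffSum_succ_self x c n).symm))

theorem Qpoly_map_range_pos (hx : AntitoneOn x (Iic m)) (hy : x 0 < y) :
    0 < Qpoly ((List.range (m + 1)).map x) y := by
  refine Qpoly_pos (List.pairwise_map.mpr ?_) (List.forall_mem_map.mpr fun k hk => ?_)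
  · refine List.pairwise_lt_range.imp_of_mem fun hi hj hij => hx ?_ ?_ hij.le
    · exact Nat.lt_succ_iff.mp (List.mem_range.mp hi)
    · exact Nat.lt_succ_iff.mp (List.mem_range.mp hj)
  · have hkm : k ≤ m := Nat.lt_succ_iff.mp (List.mem_range.mp hk)
    exact (hx (Nat.zero_le m) hkm (Nat.zero_le k)).trans_lt hy

theorem exists_eq_gontcharoffSum_add_mul_Qpoly {F : ℕ → ℝ → ℝ}
    (hF : ∀ k ≤ m, ContinuousOn (F k) (Icc a b))
    (hF' : ∀ k ≤ m, ∀ t ∈ Ioo a b, HasDerivAt (F k) (F (k + 1) t) t)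
    (hx : AntitoneOn x (Iic m)) (ha : a ≤ x m) (hy : y ∈ Ioc (x 0) b) :
    ∃ ξ ∈ Ioo (x m) y,
      F 0 y = gontcharoffSum x (fun k => F k (x k)) (m + 1) y
        + F (m + 1) ξ * Qpoly ((List.range (m + 1)).map x) y := by
  induction m using Nat.strong_induction_on generalizing F x y with | _ m ih
  have ha₀ : a ≤ x 0 := ha.trans (hx (Nat.zero_le m) self_mem_Iic (Nat.zero_le m))
  obtain ⟨η, hη, hratio⟩ :=
    exists_sub_gontcharoffSum_mul_Qpoly_eq (c := fun k => F k (x k)) m hy.1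
      ((hF 0 (Nat.zero_le m)).mono (Icc_subset_Icc ha₀ hy.2))
      (fun t ht => hF' 0 (Nat.zero_le m) t (Ioo_subset_Ioo ha₀ hy.2 ht)) rfl
  cases m with
  | zero =>
    refine ⟨η, hη, sub_eq_iff_eq_add'.mp ?_⟩
    simpa [gontcharoffSum, Qpoly] using hratio
  | succ m =>
    have hx_tail : AntitoneOn (fun k => x (k + 1)) (Iic m) := fun i hi j hj hij =>
      hx (Nat.succ_le_succ hi) (Nat.succ_le_succ hj) (Nat.succ_le_succ hij)
    have hx₁η : x 1 < η :=
      (hx (Nat.zero_le _) (Nat.succ_le_succ (Nat.zero_le m)) zero_le_one).trans_lt hη.1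
    obtain ⟨ξ, hξ, hFη⟩ := ih m (Nat.lt_succ_self m) (F := fun k => F (k + 1))
      (fun k hk => hF (k + 1) (Nat.succ_le_succ hk))
      (fun k hk => hF' (k + 1) (Nat.succ_le_succ hk)) hx_tail ha ⟨hx₁η, hη.2.le.trans hy.2⟩
    refine ⟨ξ, ⟨hξ.1, hξ.2.trans hη.2⟩, sub_eq_iff_eq_add'.mp ?_⟩
    refine mul_right_cancel₀ (Qpoly_map_range_pos hx_tail hx₁η).ne' ?_
    rw [hratio, sub_eq_iff_eq_add'.mpr hFη, mul_right_comm]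

end Remainder

theorem hasDerivAt_iteratedDerivWithin {𝕜 E : Type*} [NontriviallyNormedField 𝕜]
    [NormedAddCommGroup E] [NormedSpace 𝕜 E] {f : 𝕜 → E} {s : Set 𝕜} {k : ℕ} {t : 𝕜}
    (hs : s ∈ nhds t) (hf : DifferentiableAt 𝕜 (iteratedDerivWithin k f s) t) :
    HasDerivAt (iteratedDerivWithin k f s) (iteratedDerivWithin (k + 1) f s t) t := by
  rw [iteratedDerivWithin_succ, derivWithin_of_mem_nhds hs]
  exact hf.hasDerivAt

theorem stmt_18_general {a b y : ℝ} {f : ℝ → ℝ} {x : ℕ → ℝ} {m : ℕ}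
    (hf : ContDiffOn ℝ m f (Icc a b))
    (hf' : DifferentiableOn ℝ (iteratedDerivWithin m f (Icc a b)) (Ioo a b))
    (hx : AntitoneOn x (Iic m)) (ha : a ≤ x m) (hy : y ∈ Ioc (x 0) b) :
    ∃ ξ ∈ Ioo (x m) y,
      f y = (∑ k ∈ Finset.range (m + 1),
          iteratedDerivWithin k f (Icc a b) (x k) * Qpoly ((List.range k).map x) y)
        + iteratedDerivWithin (m + 1) f (Icc a b) ξ * Qpoly ((List.range (m + 1)).map x) y := by
  have hab : a < b :=
    (ha.trans (hx (Nat.zero_le m) self_mem_Iic (Nat.zero_le m))).trans_lt (hy.1.trans_le hy.2)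
  have hunique : UniqueDiffOn ℝ (Icc a b) := uniqueDiffOn_Icc hab
  have hdiff : ∀ k ≤ m, DifferentiableOn ℝ (iteratedDerivWithin k f (Icc a b)) (Ioo a b) := by
    intro k hk
    rcases hk.eq_or_lt with rfl | hkm
    · exact hf'
    · exact (hf.differentiableOn_iteratedDerivWithin (by exact_mod_cast hkm) hunique).mono
        Ioo_subset_Icc_self
  simpa only [iteratedDerivWithin_zero, gontcharoffSum] using exists_eq_gontcharoffSum_add_mul_Qpoly
    (F := fun k => iteratedDerivWithin k f (Icc a b))
    (fun k hk => hf.continuousOn_iteratedDerivWithin (by exact_mod_cast hk) hunique)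
    (fun k hk t ht => hasDerivAt_iteratedDerivWithin (Icc_mem_nhds ht.1 ht.2)
      ((hdiff k hk).differentiableAt (Ioo_mem_nhds ht.1 ht.2))) hx ha hy

/-- Generalized Taylor theorem with nodes `x₀ > x₁ > x₂ > ⋯`. -/
theorem stmt_18 (a b : ℝ) (hab : a < b) (f : ℝ → ℝ)
    (hf : ContDiffOn ℝ (⊤ : ℕ∞) f (Icc a b))
    (x : ℕ → ℝ) (hmem : ∀ n, x n ∈ Icc a b) (hx : StrictAnti x) (hx0 : x 0 < b) :
    ∀ m : ℕ, ∀ y ∈ Ioc (x 0) b, ∃ ξ ∈ Ioo (x m) y,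
      f y = (∑ k ∈ Finset.range (m + 1),
          iteratedDerivWithin k f (Icc a b) (x k) * Qpoly ((List.range k).map x) y)
        + iteratedDerivWithin (m + 1) f (Icc a b) ξ * Qpoly ((List.range (m + 1)).map x) y :=
  fun m _ hy => stmt_18_general (hf.of_le (by exact_mod_cast le_top))
    ((hf.differentiableOn_iteratedDerivWithin (m := m) (by exact_mod_cast ENat.natCast_lt_top m)
      (uniqueDiffOn_Icc hab)).mono Ioo_subset_Icc_self)
    (hx.antitone.antitoneOn _) (hmem m).1 hy
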